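/- arXiv:1911.11969 — 2 statements merged into one kernel-verified Lean document; each statement's English description precedes it below -/
import Mathlib

section
/- For any fixed τ ∈ ℝ and ε > 0 there exists a constant C = C(τ,ε) > 0 such that for all sufficiently large N there is a choice of signs (s_1,…,s_N) ∈ {−1,1}^N with |Σ_{n=1}^N s_n/n − τ| ≤ C·exp(−N^{1/3−ε}). -/
/-!
Fix `N` and let `P` be the set of primes `p` with `N ^ (3/4) < p ≤ N`. The signs of the `n ≤ N`
outside `P` are chosen greedily, which already approximates `τ` with an error `x = O(1/N)`
(`exists_abs_greedyError_le`). The signs on `P` are then treated as independent and uniform: if `S`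
is the resulting random signed sum of the `1/p`, then
`E cos (t (x + S)) = cos (t x) ∏_{p ∈ P} cos (t / p)` (`sum_cos_signedSum`).

Weighting the values of `x + S` with a Fejér kernel at the frequencies `d / N`, `|d| < K`,
gives a quantity of size at least `K / 2` as soon as each term with `d ≠ 0` is at least `-1/(2K)`,
whereas it is at most `π² N² / η²` if `x + S` always stays at distance more than `η` from `0`
(`exists_signedSum_abs_le`). Hence `K ≍ N² / η²` forces some choice of signs with `|x + S| ≤ η`.

It remains to bound the terms from below. When `t ≤ N ^ (3/4)`, all the cosines involved are
nonnegative, because `|t x| ≤ 1` and `t / p ≤ 1`. When `t > N ^ (3/4)`, put `δ = N ^ (-1/3)`. If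
`t / (π p)` is within `δ` of an integer `m`, then `p` divides the integer `p m`, which is within
`δ N = N ^ (2/3)` of `t / π` and positive. There are `O(N ^ (2/3))` such integers and each has
`O(log (t + N))` prime factors, so for `log t = O(log N + N ^ (1/3 - ε))` there are at most
`O(N ^ (2/3) (log N + N ^ (1/3 - ε)))` exceptional primes, fewer than half of `P` by Chebyshev's
lower bound for `π(N)`. Each other prime contributes a factor at most `exp (-2 δ²)`, which makes
the product at most `exp (-c N ^ (1/3) / log N)`. This is below `1/(2K)` for
`η = exp (-N ^ (1/3 - ε))` (`abs_prod_cos_midPrimes_le`).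
-/

open Filter Real

/-! ### Random signs and the Fejér kernel -/

/-- The signed sum `∑_{p ∈ P} ± w p`, with sign `+1` on `A` and `-1` on `P \ A`. Uniform random
signs on `P` are encoded by summing over all `A ∈ P.powerset`. -/
noncomputable def signedSum (w : ℕ → ℝ) (P A : Finset ℕ) : ℝ :=
  ∑ p ∈ P, (if p ∈ A then 1 else -1) * w p

/-- The characteristic function of a sum of independent random signs, before normalization by the
number `2 ^ |P|` of choices. -/
theorem sum_cos_signedSum (w : ℕ → ℝ) (t : ℝ) (P : Finset ℕ) (x : ℝ) :
    ∑ A ∈ P.powerset, cos (t * (x + signedSum w P A)) =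
      2 ^ P.card * (cos (t * x) * ∏ p ∈ P, cos (t * w p)) := by
  induction P using Finset.induction_on generalizing x with
  | empty => simp [signedSum]
  | insert a P ha ih =>
    have h₁ : ∀ A ∈ P.powerset, cos (t * (x + signedSum w (insert a P) A)) =
        cos (t * ((x - w a) + signedSum w P A)) := by
      intro A hA
      have haA : a ∉ A := fun h => ha (Finset.mem_powerset.1 hA h)
      simp only [signedSum, Finset.sum_insert ha, haA, if_false]
      ring_nf
    have h₂ : ∀ A ∈ P.powerset, cos (t * (x + signedSum w (insert a P) (insert a A))) =
        cos (t * ((x + w a) + signedSum w P A)) := by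
      intro A hA
      have hc : ∑ p ∈ P, (if p ∈ insert a A then (1 : ℝ) else -1) * w p =
          ∑ p ∈ P, (if p ∈ A then (1 : ℝ) else -1) * w p := by
        refine Finset.sum_congr rfl fun p hp => ?_
        have : p ≠ a := fun h => ha (h ▸ hp)
        simp [Finset.mem_insert, this]
      simp only [signedSum, Finset.sum_insert ha, hc, Finset.mem_insert_self, if_true]
      ring_nf
    rw [Finset.sum_powerset_insert ha, Finset.sum_congr rfl h₁, Finset.sum_congr rfl h₂, ih, ih,
      Finset.card_insert_of_notMem ha, Finset.prod_insert ha, mul_sub, mul_add, cos_sub, cos_add]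
    ring

theorem sum_sum_cos (K : ℕ) (y : ℝ) :
    ∑ j ∈ Finset.range K, ∑ k ∈ Finset.range K, cos (((j : ℝ) - k) * y) =
      (∑ k ∈ Finset.range K, cos (k * y)) ^ 2 + (∑ k ∈ Finset.range K, sin (k * y)) ^ 2 := by
  simp only [sq, Finset.sum_mul_sum, ← Finset.sum_add_distrib, sub_mul, cos_sub]

/-- Decay of the Fejér kernel: it is the squared modulus of a geometric sum with ratio `exp (I y)`,
and `‖exp (I y) - 1‖ ≥ 2 |y| / π`. -/
theorem sum_sum_cos_mul_sq_le (K : ℕ) {y : ℝ} (hy : |y| ≤ π) :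
    (∑ j ∈ Finset.range K, ∑ k ∈ Finset.range K, cos (((j : ℝ) - k) * y)) * y ^ 2 ≤ π ^ 2 := by
  set z : ℂ := Complex.exp (Complex.I * y) with hz
  have hpow : ∀ k : ℕ, z ^ k = Complex.exp (Complex.I * ((k * y : ℝ) : ℂ)) := by
    intro k
    rw [hz, ← Complex.exp_nat_mul]
    push_cast; ring_nf
  have hre : (∑ k ∈ Finset.range K, z ^ k).re = ∑ k ∈ Finset.range K, cos (k * y) := by
    rw [Complex.re_sum]
    refine Finset.sum_congr rfl fun k _ => ?_
    rw [hpow, mul_comm, Complex.exp_ofReal_mul_I_re]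
  have him : (∑ k ∈ Finset.range K, z ^ k).im = ∑ k ∈ Finset.range K, sin (k * y) := by
    rw [Complex.im_sum]
    refine Finset.sum_congr rfl fun k _ => ?_
    rw [hpow, mul_comm, Complex.exp_ofReal_mul_I_im]
  have hsq : ∑ j ∈ Finset.range K, ∑ k ∈ Finset.range K, cos (((j : ℝ) - k) * y) =
      ‖∑ k ∈ Finset.range K, z ^ k‖ ^ 2 := by
    rw [sum_sum_cos, ← hre, ← him, ← Complex.normSq_eq_norm_sq, Complex.normSq_apply]
    ring
  have hgeom : ‖∑ k ∈ Finset.range K, z ^ k‖ * ‖z - 1‖ ≤ 2 := by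
    rw [← norm_mul, geom_sum_mul, hpow]
    refine (norm_sub_le _ _).trans ?_
    rw [mul_comm, Complex.norm_exp_ofReal_mul_I]
    norm_num
  have hlow : 2 * |y| / π ≤ ‖z - 1‖ := by
    rw [hz, Complex.norm_exp_I_mul_ofReal_sub_one, norm_mul, Real.norm_eq_abs, Real.norm_eq_abs]
    have := Real.mul_abs_le_abs_sin (x := y / 2) (by rw [abs_div, abs_two]; linarith)
    rw [abs_div, abs_two] at this
    rw [abs_two]
    calc 2 * |y| / π = 2 * (2 / π * (|y| / 2)) := by ring
      _ ≤ _ := by gcongr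
  have hmul : ‖∑ k ∈ Finset.range K, z ^ k‖ * |y| ≤ π := by
    have := (mul_le_mul_of_nonneg_left hlow (norm_nonneg (∑ k ∈ Finset.range K, z ^ k))).trans hgeom
    rw [mul_div_assoc', div_le_iff₀ pi_pos] at this
    linarith
  rw [hsq, ← sq_abs y, ← mul_pow]
  gcongr

/-- If the characteristic function of `x + signedSum w P A` (for random `A`) is nowhere very negative
on the frequencies `d θ` with `0 < d < K`, then some value of `x + signedSum w P A` is small. The
proof evaluates the average of the Fejér kernel in two ways: the diagonal frequencies contribute
`K`, the others at least `-K² / (2K)`. -/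
theorem exists_signedSum_abs_le (w : ℕ → ℝ) (P : Finset ℕ) {x θ η : ℝ} {K : ℕ} (hθ : 0 < θ)
    (hη : 0 < η) (hsmall : ∀ A ∈ P.powerset, |θ * (x + signedSum w P A)| ≤ π)
    (hφ : ∀ d : ℕ, 1 ≤ d → d < K →
      -(1 / (2 * K)) ≤ cos (d * θ * x) * ∏ p ∈ P, cos (d * θ * w p))
    (hK : 2 * π ^ 2 < K * (θ * η) ^ 2) :
    ∃ A ∈ P.powerset, |x + signedSum w P A| ≤ η := by
  by_contra! hcon
  have hK0 : 0 < (K : ℝ) := by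
    rcases Nat.eq_zero_or_pos K with h | h
    · subst h; exfalso; have := pi_pos; simp at hK; nlinarith
    · exact_mod_cast h
  -- the hypothesis on the frequencies, for signed differences and with the diagonal included
  have hφ' : ∀ j ∈ Finset.range K, ∀ k ∈ Finset.range K, (if j = k then 1 else 0) - 1 / (2 * K) ≤
      cos (((j : ℝ) - k) * θ * x) * ∏ p ∈ P, cos (((j : ℝ) - k) * θ * w p) := by
    intro j hj k hk
    rw [Finset.mem_range] at hj hk
    rcases lt_trichotomy j k with h | h | h
    · have := hφ (k - j) (by omega) (by omega)
      rw [Nat.cast_sub h.le] at this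
      rw [if_neg h.ne, zero_sub]
      refine this.trans_eq ?_
      have hc : ∀ a : ℝ, cos (((j : ℝ) - k) * θ * a) = cos (((k : ℝ) - j) * θ * a) := by
        intro a; rw [← cos_neg]; ring_nf
      simp only [hc]
    · subst h
      simp
    · have := hφ (j - k) (by omega) (by omega)
      rw [Nat.cast_sub h.le] at this
      rwa [if_neg h.ne', zero_sub]
  have hcomm : ∑ A ∈ P.powerset, ∑ j ∈ Finset.range K, ∑ k ∈ Finset.range K,
      cos (((j : ℝ) - k) * (θ * (x + signedSum w P A))) =
      2 ^ P.card * ∑ j ∈ Finset.range K, ∑ k ∈ Finset.range K,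
        cos (((j : ℝ) - k) * θ * x) * ∏ p ∈ P, cos (((j : ℝ) - k) * θ * w p) := by
    rw [Finset.sum_comm, Finset.mul_sum]
    refine Finset.sum_congr rfl fun j _ => ?_
    rw [Finset.sum_comm, Finset.mul_sum]
    refine Finset.sum_congr rfl fun k _ => ?_
    rw [← sum_cos_signedSum]
    simp only [mul_assoc]
  have hlow : (K : ℝ) / 2 ≤ ∑ j ∈ Finset.range K, ∑ k ∈ Finset.range K,
        cos (((j : ℝ) - k) * θ * x) * ∏ p ∈ P, cos (((j : ℝ) - k) * θ * w p) := by
    refine le_trans (le_of_eq ?_)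
      (Finset.sum_le_sum fun j hj => Finset.sum_le_sum fun k hk => hφ' j hj k hk)
    have : ∀ j ∈ Finset.range K, ∑ k ∈ Finset.range K,
        ((if j = k then (1 : ℝ) else 0) - 1 / (2 * K)) = 1 / 2 := by
      intro j hj
      rw [Finset.sum_sub_distrib, Finset.sum_ite_eq, if_pos hj]
      simp
      field_simp
      norm_num
    rw [Finset.sum_congr rfl this]
    simp
    ring
  have hup : (∑ A ∈ P.powerset, ∑ j ∈ Finset.range K, ∑ k ∈ Finset.range K,
      cos (((j : ℝ) - k) * (θ * (x + signedSum w P A)))) * (θ * η) ^ 2 ≤ 2 ^ P.card * π ^ 2 := by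
    rw [Finset.sum_mul]
    refine (Finset.sum_le_card_nsmul _ _ (π ^ 2) fun A hA => ?_).trans_eq ?_
    · refine le_trans ?_ (sum_sum_cos_mul_sq_le K (hsmall A hA))
      refine mul_le_mul_of_nonneg_left ?_ ?_
      · rw [← sq_abs (θ * (x + signedSum w P A)), abs_mul, abs_of_pos hθ]
        have := hcon A hA
        gcongr
      · rw [sum_sum_cos]; positivity
    · simp
  rw [hcomm, mul_assoc] at hup
  have h2 := le_of_mul_le_mul_left hup (by positivity)
  have h3 := (mul_le_mul_of_nonneg_right hlow (sq_nonneg (θ * η))).trans h2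
  linarith

/-! ### Small values of the product of cosines -/

theorem abs_cos_le_exp {u δ : ℝ} (hδ : 0 ≤ δ) (hu : δ ≤ |u - round u|) :
    |cos (π * u)| ≤ exp (-(2 * δ ^ 2)) := by
  have h1 : |sin (π * u)| = |sin (π * (u - round u))| := by
    rw [mul_sub, mul_comm π (round u : ℝ), sin_sub_int_mul_pi, abs_mul, abs_neg_one_zpow, one_mul]
  have h2 : 2 * δ ≤ |sin (π * u)| := by
    rw [h1]
    have h := abs_sub_round u
    have := Real.mul_abs_le_abs_sin (x := π * (u - round u)) (by
      rw [abs_mul, abs_of_pos pi_pos]; nlinarith [pi_pos])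
    refine le_trans ?_ this
    rw [abs_mul, abs_of_pos pi_pos]
    have : 2 / π * (π * |u - round u|) = 2 * |u - round u| := by
      field_simp
    linarith
  have h3 : |cos (π * u)| ^ 2 ≤ exp (-(2 * δ ^ 2)) ^ 2 := by
    rw [sq_abs, cos_sq', ← exp_nat_mul, ← sq_abs (sin _)]
    have h4 := add_one_le_exp (((2 : ℕ) : ℝ) * (-(2 * δ ^ 2)))
    push_cast at h4 ⊢
    nlinarith
  exact le_of_sq_le_sq h3 (exp_pos _).le

theorem card_primeFactors_le {a : ℕ} (ha : a ≠ 0) :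
    (a.primeFactors.card : ℝ) ≤ Real.log a / Real.log 2 := by
  have h : 2 ^ a.primeFactors.card ≤ a :=
    (Finset.pow_card_le_prod _ _ _ fun p hp => (Nat.prime_of_mem_primeFactors hp).two_le).trans
      (Nat.le_of_dvd (Nat.pos_of_ne_zero ha) (Nat.prod_primeFactors_dvd a))
  have h' : (2 : ℝ) ^ a.primeFactors.card ≤ a := by exact_mod_cast h
  have := Real.log_le_log (by positivity) h'
  rw [Real.log_pow] at this
  rwa [le_div_iff₀ (Real.log_pos one_lt_two)]

/-- Few primes `p ≤ N` have `v / p` within `δ` of an integer: if `m` is that integer, then `p` is a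
prime factor of `p * m`, one of at most `2 δ N + 1` positive integers within `δ N` of `v`. -/
theorem card_bad_le {P : Finset ℕ} {N : ℕ} {v δ : ℝ} (hP : ∀ p ∈ P, p.Prime ∧ p ≤ N)
    (hv : δ * N < v) (hv1 : 1 ≤ v) (hδ : 0 ≤ δ) :
    ((P.filter fun p : ℕ => |v / p - round (v / p)| < δ).card : ℝ) ≤
      (2 * (δ * N) + 1) * (Real.log (v + δ * N) / Real.log 2) := by
  set H := δ * N with hH
  have hH0 : 0 ≤ H := by positivity
  set I : Finset ℕ := Finset.Icc ⌈v - H⌉₊ ⌊v + H⌋₊ with hI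
  have hsub : (P.filter fun p : ℕ => |v / p - round (v / p)| < δ) ⊆ I.biUnion Nat.primeFactors := by
    intro p hp
    rw [Finset.mem_filter] at hp
    obtain ⟨hpP, hlt⟩ := hp
    obtain ⟨hpp, hpN⟩ := hP p hpP
    have hp0 : (0 : ℝ) < p := by exact_mod_cast hpp.pos
    have hpN' : (p : ℝ) ≤ N := by exact_mod_cast hpN
    set m : ℤ := round (v / p) with hm
    have hclose : |v - p * m| ≤ H := by
      have : v - p * m = p * (v / p - m) := by field_simp
      rw [this, abs_mul, abs_of_pos hp0, hH]
      nlinarith [abs_nonneg (v / p - (m : ℝ))]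
    rw [abs_le] at hclose
    have hmpos : 0 < m := by
      have : (0 : ℝ) < p * m := by linarith
      have : (0 : ℝ) < m := pos_of_mul_pos_right this hp0.le
      exact_mod_cast this
    obtain ⟨k, hk⟩ := Int.eq_ofNat_of_zero_le hmpos.le
    have hmk : (m : ℝ) = k := by rw [hk]; simp
    rw [hmk] at hclose
    have hk0 : k ≠ 0 := by rintro rfl; simp [hk] at hmpos
    refine Finset.mem_biUnion.2 ⟨p * k, ?_, ?_⟩
    · rw [hI, Finset.mem_Icc]
      constructor
      · rw [Nat.ceil_le]; push_cast; linarith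
      · apply Nat.le_floor; push_cast; linarith
    · rw [Nat.mem_primeFactors]
      exact ⟨hpp, dvd_mul_right _ _, mul_ne_zero hpp.ne_zero hk0⟩
  have hIpos : ∀ a ∈ I, (0 : ℝ) < a ∧ (a : ℝ) ≤ v + H := by
    intro a ha
    rw [hI, Finset.mem_Icc, Nat.ceil_le] at ha
    exact ⟨by linarith [ha.1], (Nat.le_floor_iff (by linarith)).1 ha.2⟩
  have hlog : 0 ≤ Real.log (v + H) / Real.log 2 :=
    div_nonneg (Real.log_nonneg (by linarith)) (Real.log_pos one_lt_two).le
  have hcardI : (I.card : ℝ) ≤ 2 * H + 1 := by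
    rw [hI, Nat.card_Icc]
    have h1 := Nat.le_ceil (v - H)
    have h2 := Nat.floor_le (show 0 ≤ v + H by linarith)
    rcases le_total ⌈v - H⌉₊ (⌊v + H⌋₊ + 1) with h | h
    · rw [Nat.cast_sub h]; push_cast; linarith
    · rw [Nat.sub_eq_zero_of_le h]; push_cast; linarith
  calc ((P.filter fun p : ℕ => |v / p - round (v / p)| < δ).card : ℝ)
      ≤ ((I.biUnion Nat.primeFactors).card : ℝ) := by exact_mod_cast Finset.card_le_card hsub
    _ ≤ ∑ a ∈ I, (a.primeFactors.card : ℝ) := by exact_mod_cast Finset.card_biUnion_le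
    _ ≤ ∑ a ∈ I, Real.log (v + H) / Real.log 2 := by
        refine Finset.sum_le_sum fun a ha => ?_
        obtain ⟨h1, h2⟩ := hIpos a ha
        refine (card_primeFactors_le (by rintro rfl; simp at h1)).trans ?_
        have h4 := Real.log_pos one_lt_two
        gcongr
    _ = I.card * (Real.log (v + H) / Real.log 2) := by simp
    _ ≤ _ := by gcongr

/-- The factors for which `t / (π p)` has distance at least `δ` from the integers, all but at most
`B` of them, are bounded by `exp (-2 δ²)`; the others by `1`. -/
theorem abs_prod_cos_le {P : Finset ℕ} {t δ B : ℝ} (hδ : 0 ≤ δ)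
    (hB : ((P.filter fun p : ℕ => |t / π / p - round (t / π / p)| < δ).card : ℝ) ≤ B) :
    |∏ p ∈ P, cos (t * (1 / (p : ℝ)))| ≤ exp (-(2 * δ ^ 2) * (P.card - B)) := by
  rw [Finset.abs_prod, ← Finset.prod_filter_mul_prod_filter_not P
    (fun p : ℕ => |t / π / p - round (t / π / p)| < δ)]
  have hcard := Finset.card_filter_add_card_filter_not (s := P)
    (fun p : ℕ => |t / π / p - round (t / π / p)| < δ)
  set U := P.filter fun p : ℕ => |t / π / p - round (t / π / p)| < δ
  set V := P.filter fun p : ℕ => ¬ |t / π / p - round (t / π / p)| < δ with hV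
  have h1 : ∏ p ∈ U, |cos (t * (1 / (p : ℝ)))| ≤ 1 :=
    Finset.prod_le_one (fun _ _ => abs_nonneg _) fun _ _ => abs_cos_le_one _
  have h2 : ∏ p ∈ V, |cos (t * (1 / (p : ℝ)))| ≤ exp (-(2 * δ ^ 2)) ^ V.card := by
    rw [← Finset.prod_const]
    refine Finset.prod_le_prod (fun _ _ => abs_nonneg _) fun p hp => ?_
    rw [hV, Finset.mem_filter, not_lt] at hp
    have := abs_cos_le_exp hδ hp.2
    have e : t * (1 / (p : ℝ)) = π * (t / π / p) := by field_simp
    rwa [e]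
  have h3 : (P.card : ℝ) - B ≤ V.card := by
    have : (U.card : ℝ) + V.card = P.card := by exact_mod_cast hcard
    linarith
  calc _ ≤ 1 * exp (-(2 * δ ^ 2)) ^ V.card := by
        refine mul_le_mul h1 h2 (Finset.prod_nonneg fun _ _ => abs_nonneg _) zero_le_one
    _ = exp (-(2 * δ ^ 2) * V.card) := by rw [one_mul, ← exp_nat_mul, mul_comm]
    _ ≤ _ := by
        rw [exp_le_exp]
        nlinarith [sq_nonneg δ]

/-! ### Greedy signs -/

/-- The error `∑_{k ≤ n, ¬ Q k} s k / k - τ` of the greedy choice of signs: each `s k` is opposite to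
the sign of the error just before `k`, and the indices satisfying `Q` are skipped. -/
noncomputable def greedyError (Q : ℕ → Prop) [DecidablePred Q] (τ : ℝ) : ℕ → ℝ
  | 0 => -τ
  | n + 1 => greedyError Q τ n +
      if Q (n + 1) then 0 else (if 0 ≤ greedyError Q τ n then -1 else 1) / ((n + 1 : ℕ) : ℝ)

theorem abs_greedyError_succ_le (Q : ℕ → Prop) [DecidablePred Q] (τ : ℝ) (n : ℕ) :
    |greedyError Q τ (n + 1)| ≤ max (1 / ((n + 1 : ℕ) : ℝ)) |greedyError Q τ n| := by
  have hn : 0 < 1 / ((n + 1 : ℕ) : ℝ) := by positivity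
  rw [greedyError]
  set e := greedyError Q τ n
  split_ifs with h h'
  · simp
  · rw [neg_div, le_max_iff, abs_of_nonneg h']
    rcases le_total e (1 / ((n + 1 : ℕ) : ℝ)) with h | h
    · left; rw [abs_le]; constructor <;> linarith
    · right; rw [abs_le]; constructor <;> linarith
  · push Not at h'
    rw [le_max_iff, abs_of_neg h']
    rcases le_total (-e) (1 / ((n + 1 : ℕ) : ℝ)) with h | h
    · left; rw [abs_le]; constructor <;> linarith
    · right; rw [abs_le]; constructor <;> linarith

theorem abs_greedyError_succ_le' (Q : ℕ → Prop) [DecidablePred Q] (τ : ℝ) {n : ℕ} (h : ¬ Q (n + 1)) :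
    |greedyError Q τ (n + 1)| ≤
      max (1 / ((n + 1 : ℕ) : ℝ)) (|greedyError Q τ n| - 1 / ((n + 1 : ℕ) : ℝ)) := by
  have hn : 0 < 1 / ((n + 1 : ℕ) : ℝ) := by positivity
  rw [greedyError, if_neg h]
  set e := greedyError Q τ n
  split_ifs with h'
  · rw [neg_div, le_max_iff, abs_of_nonneg h']
    rcases le_total e (1 / ((n + 1 : ℕ) : ℝ)) with h | h
    · left; rw [abs_le]; constructor <;> linarith
    · right; rw [abs_of_nonneg (by linarith)]; linarith
  · push Not at h'
    rw [le_max_iff, abs_of_neg h']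
    rcases le_total (-e) (1 / ((n + 1 : ℕ) : ℝ)) with h | h
    · left; rw [abs_le]; constructor <;> linarith
    · right; rw [abs_of_nonpos (by linarith)]; linarith

/-- The greedy error after `2 (k + 2)` steps, uniformly in the set of skipped odd indices. Each even
index `2 (k + 3)` is used, so it lowers the second bound by half of `1 / (k + 3)`; the first bound
is preserved because `1 / (k + 2) - 1 / (2 (k + 3)) ≤ 1 / (k + 3)`. -/
theorem abs_greedyError_two_mul_le (Q : ℕ → Prop) [DecidablePred Q] (hQ : ∀ n, Even n → ¬ Q n)
    (τ : ℝ) (k : ℕ) :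
    |greedyError Q τ (2 * (k + 2))| ≤
      max (1 / ((k : ℝ) + 2)) (|τ| + 1 - 1 / 2 * ∑ i ∈ Finset.range k, 1 / ((i : ℝ) + 3)) := by
  induction k with
  | zero =>
    have h1 := abs_greedyError_succ_le Q τ 0
    have h2 := abs_greedyError_succ_le Q τ 1
    have h3 := abs_greedyError_succ_le Q τ 2
    have h4 := abs_greedyError_succ_le Q τ 3
    have h0 : |greedyError Q τ 0| = |τ| := by simp [greedyError]
    norm_num at h1 h2 h3 h4 ⊢
    have := abs_nonneg τ
    grind
  | succ k ih =>
    have h1 := abs_greedyError_succ_le Q τ (2 * (k + 2))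
    have h2 := abs_greedyError_succ_le' Q τ (n := 2 * (k + 2) + 1) (hQ _ ⟨k + 3, by ring⟩)
    have e : 2 * (k + 1 + 2) = 2 * (k + 2) + 1 + 1 := by ring
    rw [e, Finset.sum_range_succ]
    have hk : (0 : ℝ) ≤ k := by positivity
    have a1 : 1 / ((2 * (k + 2) + 1 : ℕ) : ℝ) ≤ 1 / ((k : ℝ) + 3) := by
      apply one_div_le_one_div_of_le (by positivity); push_cast; linarith
    have a2 : 1 / ((2 * (k + 2) + 1 + 1 : ℕ) : ℝ) = 1 / 2 * (1 / ((k : ℝ) + 3)) := by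
      push_cast; field_simp; ring
    have a3 : 1 / ((k : ℝ) + 2) - 1 / 2 * (1 / ((k : ℝ) + 3)) ≤ 1 / ((k : ℝ) + 3) := by
      rw [← sub_nonneg]
      have : 1 / ((k : ℝ) + 3) - (1 / ((k : ℝ) + 2) - 1 / 2 * (1 / ((k : ℝ) + 3))) =
        k / (2 * (k + 2) * (k + 3)) := by field_simp; ring
      rw [this]; positivity
    have a4 : 0 < 1 / ((k : ℝ) + 3) := by positivity
    have a5 : ((k + 1 : ℕ) : ℝ) + 2 = k + 3 := by push_cast; ring
    rw [a2] at h2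
    rw [a5]
    rcases le_max_iff.1 h2 with h | h
    · exact le_max_of_le_left (by linarith)
    rcases le_max_iff.1 h1 with h' | h'
    · exact le_max_of_le_left (by linarith)
    rcases le_max_iff.1 ih with h'' | h''
    · exact le_max_of_le_left (by linarith)
    · exact le_max_of_le_right (by linarith)

/-- The threshold `N₁` does not depend on the set `Q` of skipped indices, which matters because `Q`
is later chosen in terms of `N`. -/
theorem exists_abs_greedyError_le (τ : ℝ) : ∃ N₁ : ℕ, ∀ (Q : ℕ → Prop) [DecidablePred Q],
    (∀ n, Even n → ¬ Q n) → ∀ N, N₁ ≤ N → |greedyError Q τ N| ≤ 5 / N := by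
  have hdiv : Tendsto (fun k : ℕ => ∑ i ∈ Finset.range k, 1 / ((i : ℝ) + 3)) atTop atTop := by
    have h := (not_summable_iff_tendsto_nat_atTop_of_nonneg
      (f := fun i : ℕ => 1 / ((i : ℝ) + 3)) (fun i => by positivity)).1 (by
        intro hs
        have : Summable fun i : ℕ => 1 / ((i + 3 : ℕ) : ℝ) := by simpa using hs
        exact Real.not_summable_one_div_natCast ((summable_nat_add_iff 3).1 this))
    exact h
  obtain ⟨k₀, hk₀⟩ := eventually_atTop.1 (hdiv.eventually_ge_atTop (2 * (|τ| + 1)))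
  refine ⟨2 * (k₀ + 2) + 10, fun Q _ hQ N hN => ?_⟩
  have heven : ∀ k, k₀ ≤ k → |greedyError Q τ (2 * (k + 2))| ≤ 1 / ((k : ℝ) + 2) := by
    intro k hk
    refine (abs_greedyError_two_mul_le Q hQ τ k).trans (max_le le_rfl ?_)
    have := hk₀ k hk
    have : 0 < 1 / ((k : ℝ) + 2) := by positivity
    linarith
  rcases Nat.even_or_odd' N with ⟨m, rfl | rfl⟩
  · obtain ⟨k, rfl⟩ : ∃ k, m = k + 2 := ⟨m - 2, by omega⟩
    refine (heven k (by omega)).trans ?_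
    rw [div_le_div_iff₀ (by positivity) (by positivity)]
    push_cast; nlinarith
  · obtain ⟨k, rfl⟩ : ∃ k, m = k + 2 := ⟨m - 2, by omega⟩
    refine (abs_greedyError_succ_le Q τ _).trans (max_le ?_ ((heven k (by omega)).trans ?_))
    · gcongr; norm_num
    · rw [div_le_div_iff₀ (by positivity) (by positivity)]
      push_cast; nlinarith

theorem exists_signs_greedyError (Q : ℕ → Prop) [DecidablePred Q] (τ : ℝ) :
    ∃ s : ℕ → ℝ, (∀ n, s n = 1 ∨ s n = -1) ∧
      ∀ N, (∑ n ∈ Finset.Icc 1 N, if Q n then 0 else s n / (n : ℝ)) - τ = greedyError Q τ N := by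
  refine ⟨fun n => if 0 ≤ greedyError Q τ (n - 1) then -1 else 1, fun n => ?_, fun N => ?_⟩
  · dsimp only; split_ifs <;> simp
  · induction N with
    | zero => simp [greedyError]
    | succ n ih =>
      rw [Finset.sum_Icc_succ_top (by omega), greedyError, ← ih]
      simp only [Nat.add_sub_cancel]
      rw [← ih]
      ring

/-! ### Asymptotic comparisons and the count of primes -/

theorem eventually_rpow_mul_log_le {c k a : ℝ} (hc : c < 1) (ha : 0 < a) :
    ∀ᶠ x : ℝ in atTop, x ^ c * log x ^ k ≤ a * x := by
  have h := (isLittleO_log_rpow_rpow_atTop k (sub_pos.2 hc)).bound ha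
  filter_upwards [h, eventually_gt_atTop 1] with x hx hx1
  have hx0 : 0 < x := by linarith
  have hl := log_pos hx1
  rw [Real.norm_of_nonneg (by positivity), Real.norm_of_nonneg (by positivity)] at hx
  calc x ^ c * log x ^ k ≤ x ^ c * (a * x ^ (1 - c)) := by gcongr
    _ = a * (x ^ c * x ^ (1 - c)) := by ring
    _ = a * x := by rw [← rpow_add hx0]; norm_num

/-- The right side, up to the summand `x ^ (3/4)`, is Chebyshev's lower bound for the number of
primes in `(x ^ (3/4), x]`. In the sum in parentheses, `exp` of which is `1000 x² / η²` with
`η = exp (-x ^ (1/3 - ε))`, the positivity of `ε` gives room for a factor `log x`. -/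
theorem eventually_count_le {ε : ℝ} (hε : 0 < ε) : ∀ᶠ x : ℝ in atTop,
    12 * x ^ (2 / 3 : ℝ) * (log (1000 * x ^ 2) + 2 * x ^ (1 / 3 - ε)) + x ^ (3 / 4 : ℝ) ≤
      (x * log 2 - log (x + 1)) / log x := by
  have h1 := eventually_rpow_mul_log_le (c := 2 / 3) (k := 1) (a := 1 / 1200) (by norm_num)
    (by norm_num)
  have h2 := eventually_rpow_mul_log_le (c := 2 / 3) (k := 2) (a := 1 / 1200) (by norm_num)
    (by norm_num)
  have h3 := eventually_rpow_mul_log_le (c := 1 - ε) (k := 1) (a := 1 / 1200) (by linarith)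
    (by norm_num)
  have h4 := eventually_rpow_mul_log_le (c := 3 / 4) (k := 1) (a := 1 / 1200) (by norm_num)
    (by norm_num)
  filter_upwards [h1, h2, h3, h4, eventually_gt_atTop 3] with x h1 h2 h3 h4 hx
  have hx0 : 0 < x := by linarith
  have hl : 1 < log x := by
    rw [lt_log_iff_exp_lt hx0]; linarith [exp_one_lt_d9]
  have e1 : x ^ (2 / 3 : ℝ) * x ^ (1 / 3 - ε) = x ^ (1 - ε) := by
    rw [← rpow_add hx0]; ring_nf
  have e2 : log (1000 * x ^ 2) ≤ 10 + 2 * log x := by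
    rw [log_mul (by norm_num) (by positivity), log_pow]
    have : log 1000 ≤ log (2 ^ 10) := log_le_log (by norm_num) (by norm_num)
    rw [log_pow] at this
    have := log_two_lt_d9
    push_cast at *; linarith
  have e3 : log (x + 1) ≤ x ^ (2 / 3 : ℝ) * log x * 2 := by
    have : log (x + 1) ≤ log (x ^ 2) := log_le_log (by linarith) (by nlinarith)
    rw [log_pow] at this
    have h : 1 ≤ x ^ (2 / 3 : ℝ) := one_le_rpow (by linarith) (by norm_num)
    push_cast at this; nlinarith
  have l2 := log_two_gt_d9
  rw [rpow_one] at h1 h3 h4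
  rw [rpow_two] at h2
  rw [le_div_iff₀ (by linarith)]
  have hb : x ^ (2 / 3 : ℝ) * log x * log (1000 * x ^ 2) ≤
      x ^ (2 / 3 : ℝ) * log x * (10 + 2 * log x) := by
    gcongr
  calc _ = 12 * (x ^ (2 / 3 : ℝ) * log x * log (1000 * x ^ 2)) +
        24 * ((x ^ (2 / 3 : ℝ) * x ^ (1 / 3 - ε)) * log x) + x ^ (3 / 4 : ℝ) * log x := by ring
    _ ≤ _ := by rw [e1]; nlinarith

theorem eventually_rpow_bounds : ∀ᶠ x : ℝ in atTop,
    5 * x ^ (3 / 4 : ℝ) ≤ x ∧ 4 * x ^ (2 / 3 : ℝ) < x ^ (3 / 4 : ℝ) ∧ 1 ≤ x ^ (2 / 3 : ℝ) := by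
  have h1 := (tendsto_rpow_atTop (y := 1 / 4) (by norm_num)).eventually_ge_atTop 5
  have h2 := (tendsto_rpow_atTop (y := 1 / 12) (by norm_num)).eventually_gt_atTop 4
  filter_upwards [h1, h2, eventually_gt_atTop 1] with x h1 h2 hx
  have hx0 : 0 < x := by linarith
  refine ⟨?_, ?_, one_le_rpow hx.le (by norm_num)⟩
  · calc 5 * x ^ (3 / 4 : ℝ) ≤ x ^ (1 / 4 : ℝ) * x ^ (3 / 4 : ℝ) := by gcongr
      _ = x := by rw [← rpow_add hx0]; norm_num
  · calc 4 * x ^ (2 / 3 : ℝ) < x ^ (1 / 12 : ℝ) * x ^ (2 / 3 : ℝ) := by gcongr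
      _ = x ^ (3 / 4 : ℝ) := by rw [← rpow_add hx0]; norm_num

/-- The primes `p` with `N ^ (3/4) < p ≤ N`. -/
noncomputable def midPrimes (N : ℕ) : Finset ℕ :=
  (Finset.Icc 1 N).filter fun p => p.Prime ∧ (N : ℝ) ^ (3 / 4 : ℝ) < p

theorem le_card_midPrimes (N : ℕ) :
    (N * log 2 - log (N + 1)) / log N - (N : ℝ) ^ (3 / 4 : ℝ) ≤ (midPrimes N).card := by
  have h := Chebyshev.pi_ge N
  have h1 : Nat.primeCounting N ≤ (midPrimes N).card + ⌊(N : ℝ) ^ (3 / 4 : ℝ)⌋₊ := by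
    rw [Nat.primeCounting, Nat.primeCounting', Nat.count_eq_card_filter_range]
    have hs : (Finset.range (N + 1)).filter Nat.Prime ⊆
        midPrimes N ∪ Finset.Icc 1 ⌊(N : ℝ) ^ (3 / 4 : ℝ)⌋₊ := by
      intro p hp
      rw [Finset.mem_filter, Finset.mem_range] at hp
      have := hp.2.pos
      rw [Finset.mem_union, midPrimes, Finset.mem_filter, Finset.mem_Icc, Finset.mem_Icc,
        Nat.le_floor_iff (by positivity)]
      rcases le_or_gt (p : ℝ) ((N : ℝ) ^ (3 / 4 : ℝ)) with h | h
      · exact Or.inr ⟨this, h⟩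
      · exact Or.inl ⟨⟨this, by omega⟩, hp.2, h⟩
    refine (Finset.card_le_card hs).trans ((Finset.card_union_le _ _).trans ?_)
    simp
  have h2 := Nat.floor_le (show 0 ≤ (N : ℝ) ^ (3 / 4 : ℝ) by positivity)
  have h3 : (Nat.primeCounting N : ℝ) ≤ (midPrimes N).card + ⌊(N : ℝ) ^ (3 / 4 : ℝ)⌋₊ := by
    exact_mod_cast h1
  linarith

/-! ### Assembling the signs -/

theorem abs_signedSum_midPrimes_le (N : ℕ) (A : Finset ℕ) :
    |signedSum (fun p => 1 / (p : ℝ)) (midPrimes N) A| ≤ N := by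
  have hc : ((midPrimes N).card : ℝ) ≤ N := by
    have := Finset.card_filter_le (Finset.Icc 1 N) fun p => p.Prime ∧ (N : ℝ) ^ (3 / 4 : ℝ) < p
    rw [Nat.card_Icc] at this
    exact_mod_cast this
  refine (Finset.abs_sum_le_sum_abs _ _).trans
    ((Finset.sum_le_card_nsmul _ _ 1 fun p hp => ?_).trans (by simpa using hc))
  have hp1 : (1 : ℝ) ≤ p := by
    rw [midPrimes, Finset.mem_filter, Finset.mem_Icc] at hp
    exact_mod_cast hp.1.1
  have h1 : |(if p ∈ A then (1 : ℝ) else -1)| = 1 := by split_ifs <;> simp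
  rw [abs_mul, h1, one_mul, abs_of_nonneg (by positivity)]
  exact (div_le_one (by linarith)).2 hp1

/-- The bound on the characteristic function at high frequencies, with `δ = N ^ (-1/3)`: the
hypothesis on the number of primes ensures that at most half of them are exceptional. -/
theorem abs_prod_cos_midPrimes_le {N : ℕ} {t Y : ℝ} (hN : 1 ≤ N)
    (h34 : 4 * (N : ℝ) ^ (2 / 3 : ℝ) < (N : ℝ) ^ (3 / 4 : ℝ)) (h23 : 1 ≤ (N : ℝ) ^ (2 / 3 : ℝ))
    (hcard : 12 * (N : ℝ) ^ (2 / 3 : ℝ) * Y ≤ (midPrimes N).card)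
    (ht : (N : ℝ) ^ (3 / 4 : ℝ) < t) (htY : t + N ≤ exp Y) :
    |∏ p ∈ midPrimes N, cos (t * (1 / (p : ℝ)))| ≤ exp (-Y) := by
  have hN0 : (0 : ℝ) < N := by exact_mod_cast hN
  have hN1 : (1 : ℝ) ≤ N := by exact_mod_cast hN
  have hP : ∀ p ∈ midPrimes N, p.Prime ∧ p ≤ N := by
    intro p hp
    rw [midPrimes, Finset.mem_filter, Finset.mem_Icc] at hp
    exact ⟨hp.2.1, hp.1.2⟩
  set δ : ℝ := (N : ℝ) ^ (-(1 / 3) : ℝ) with hδ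
  set H : ℝ := (N : ℝ) ^ (2 / 3 : ℝ) with hH
  have hδN : δ * N = H := by
    rw [hδ, hH]; nth_rw 2 [← rpow_one (N : ℝ)]; rw [← rpow_add hN0]; norm_num
  have hδ2 : δ ^ 2 * H = 1 := by
    rw [hδ, hH, ← rpow_natCast, ← rpow_mul hN0.le, ← rpow_add hN0]; norm_num
  have hv : H < t / π := by
    rw [lt_div_iff₀ pi_pos]
    nlinarith [pi_lt_four]
  have hHN : H ≤ N := by
    conv_rhs => rw [← rpow_one (N : ℝ)]
    exact rpow_le_rpow_of_exponent_le hN1 (by norm_num)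
  have htpi : t / π ≤ t := div_le_self (by linarith) (by linarith [pi_gt_three])
  have hlog : log (t / π + H) ≤ Y := by
    rw [log_le_iff_le_exp (by linarith)]
    linarith
  have hY : 0 ≤ Y := (log_nonneg (by linarith)).trans hlog
  have hbad := card_bad_le (P := midPrimes N) (N := N) (v := t / π) (δ := δ) hP
    (by rw [hδN]; exact hv) (by linarith) (by positivity)
  rw [hδN] at hbad
  have hB : (2 * H + 1) * (log (t / π + H) / log 2) ≤ 6 * H * Y := by
    have l2 := log_two_gt_d9
    have : log (t / π + H) / log 2 ≤ 2 * Y := by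
      rw [div_le_iff₀ (by linarith)]; nlinarith
    calc (2 * H + 1) * (log (t / π + H) / log 2) ≤ (3 * H) * (2 * Y) := by
          refine mul_le_mul (by linarith) this ?_ (by linarith)
          exact div_nonneg (log_nonneg (by linarith)) (by linarith)
      _ = _ := by ring
  refine (abs_prod_cos_le (by positivity) (hbad.trans hB)).trans ?_
  rw [exp_le_exp]
  have h1 : 6 * H * Y ≤ (midPrimes N).card - 6 * H * Y := by linarith
  have h2 := mul_le_mul_of_nonneg_left h1 (sq_nonneg δ)
  have h3 : δ ^ 2 * (6 * H * Y) = 6 * Y := by rw [← mul_assoc, mul_left_comm, hδ2]; ring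
  nlinarith

/-- **Corollary (Benatar–Nishry).**
For any fixed `τ ∈ ℝ` and `ε > 0` there is `C = C(τ,ε) > 0` such that for all
sufficiently large `N` there is a choice of signs `(s n)_{n ≤ N} ∈ {−1,1}^N` with
`|∑_{n=1}^N s n / n − τ| ≤ C · exp (−N ^ (1/3 − ε))`. -/
theorem signed_harmonic_sum_approx (τ : ℝ) (ε : ℝ) (hε : 0 < ε) :
    ∃ C : ℝ, 0 < C ∧ ∃ N₀ : ℕ, ∀ N : ℕ, N₀ ≤ N →
      ∃ s : ℕ → ℝ, (∀ n, s n = 1 ∨ s n = -1) ∧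
        |(∑ n ∈ Finset.Icc 1 N, s n / (n : ℝ)) - τ| ≤
          C * Real.exp (-((N : ℝ) ^ ((1 : ℝ) / 3 - ε))) := by
  obtain ⟨N₁, hN₁⟩ := exists_abs_greedyError_le τ
  have hev := (tendsto_natCast_atTop_atTop (R := ℝ)).eventually
    ((eventually_count_le hε).and eventually_rpow_bounds)
  obtain ⟨N₂, hN₂⟩ := eventually_atTop.1 hev
  refine ⟨1, one_pos, max (max N₁ N₂) 5, fun N hN => ?_⟩
  simp only [max_le_iff] at hN
  obtain ⟨⟨hNN₁, hNN₂⟩, hN5⟩ := hN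
  obtain ⟨hcount, h5, h34, h23⟩ := hN₂ N hNN₂
  have hN5' : (5 : ℝ) ≤ N := by exact_mod_cast hN5
  set L : ℝ := (N : ℝ) ^ ((1 : ℝ) / 3 - ε) with hL
  set Y : ℝ := log (1000 * (N : ℝ) ^ 2) + 2 * L with hY
  have hL0 : 0 ≤ L := by positivity
  have hcard : 12 * (N : ℝ) ^ (2 / 3 : ℝ) * Y ≤ (midPrimes N).card := by
    have := le_card_midPrimes N
    linarith
  have hexpY : exp Y = 1000 * (N : ℝ) ^ 2 * exp (2 * L) := by
    rw [hY, exp_add, exp_log (by positivity)]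
  have hE : 1 ≤ exp (2 * L) := one_le_exp (by positivity)
  set Q : ℕ → Prop := fun n => n ∈ midPrimes N with hQdef
  -- every prime in `midPrimes N` exceeds `4`
  have hQ : ∀ n, Even n → ¬ Q n := by
    intro n hn hq
    simp only [hQdef, midPrimes, Finset.mem_filter] at hq
    have h2 := (hq.2.1.even_iff).1 hn
    have := hq.2.2
    rw [h2] at this
    push_cast at this
    linarith
  set x := greedyError Q τ N with hx
  have hxle : |x| ≤ 5 / N := hN₁ Q hQ N hNN₁
  -- `20 > 2 π²`, so that `2 π² < K (θ η)²` for `θ = 1 / N` and `η = exp (-L)`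
  set K : ℕ := ⌈20 * (N : ℝ) ^ 2 * exp (2 * L)⌉₊ with hK
  have hKge : 20 * (N : ℝ) ^ 2 * exp (2 * L) ≤ K := Nat.le_ceil _
  have hKle : (K : ℝ) ≤ 21 * (N : ℝ) ^ 2 * exp (2 * L) := by
    have h1 := Nat.ceil_lt_add_one (show 0 ≤ 20 * (N : ℝ) ^ 2 * exp (2 * L) by positivity)
    have h2 : 1 ≤ (N : ℝ) ^ 2 * exp (2 * L) := one_le_mul_of_one_le_of_one_le (by nlinarith) hE
    linarith
  have hK0 : (0 : ℝ) < K := lt_of_lt_of_le (by positivity) hKge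
  have key : ∃ A ∈ (midPrimes N).powerset,
      |x + signedSum (fun p => 1 / (p : ℝ)) (midPrimes N) A| ≤ exp (-L) := by
    refine exists_signedSum_abs_le (fun p => 1 / (p : ℝ)) (midPrimes N)
      (x := x) (θ := 1 / N) (η := exp (-L)) (K := K) (by positivity) (exp_pos _) ?_ ?_ ?_
    · intro A _
      have h1 := abs_signedSum_midPrimes_le N A
      have h2 := abs_add_le x (signedSum (fun p => 1 / (p : ℝ)) (midPrimes N) A)
      have h3 : 5 / (N : ℝ) ≤ 1 := (div_le_one (by linarith)).2 hN5'
      rw [abs_mul, abs_of_pos (by positivity), one_div_mul_eq_div, div_le_iff₀ (by linarith)]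
      nlinarith [pi_gt_three]
    · intro d hd hdK
      have hdK' : (d : ℝ) ≤ K := by exact_mod_cast hdK.le
      set t : ℝ := d * (1 / N) with ht
      have ht0 : 0 ≤ t := by positivity
      have hneg : -(1 / (2 * (K : ℝ))) ≤ 0 := by
        rw [neg_nonpos]; positivity
      rcases le_or_gt t ((N : ℝ) ^ (3 / 4 : ℝ)) with h | h
      · refine hneg.trans (mul_nonneg ?_ (Finset.prod_nonneg fun p hp => ?_))
        · have : |t * x| ≤ 1 := by
            rw [abs_mul, abs_of_nonneg ht0]
            calc t * |x| ≤ (N : ℝ) ^ (3 / 4 : ℝ) * (5 / N) := by gcongr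
              _ ≤ 1 := by rw [mul_div_assoc', div_le_one (by linarith)]; linarith
          rw [abs_le] at this
          exact cos_nonneg_of_mem_Icc ⟨by linarith [pi_gt_three], by linarith [pi_gt_three]⟩
        · simp only [midPrimes, Finset.mem_filter] at hp
          have hp2 := hp.2.2
          have hle : t * (1 / (p : ℝ)) ≤ 1 := by
            rw [mul_one_div]
            exact (div_le_one (by linarith)).2 (by linarith)
          have hge : 0 ≤ t * (1 / (p : ℝ)) := by positivity
          exact cos_nonneg_of_mem_Icc ⟨by linarith [pi_gt_three], by linarith [pi_gt_three]⟩
      · have htle : t ≤ 21 * (N : ℝ) ^ 2 * exp (2 * L) := by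
          refine le_trans ?_ hKle
          refine le_trans ?_ hdK'
          rw [ht, mul_one_div]
          exact div_le_self (by positivity) (by linarith)
        have hNle : (N : ℝ) ≤ (N : ℝ) ^ 2 * exp (2 * L) := by nlinarith
        have hprod := abs_prod_cos_midPrimes_le (t := t) (Y := Y) (by omega) h34 h23 hcard h (by
          rw [hexpY]
          nlinarith)
        have hexp : exp (-Y) ≤ 1 / (2 * K) := by
          rw [exp_neg, ← one_div, hexpY]
          apply one_div_le_one_div_of_le (by positivity)
          nlinarith
        have h1 := mul_le_mul (abs_cos_le_one (t * x)) (hprod.trans hexp) (abs_nonneg _) zero_le_one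
        rw [← abs_mul, one_mul, abs_le] at h1
        exact h1.1
    · have h1 : (1 / (N : ℝ) * exp (-L)) ^ 2 = 1 / ((N : ℝ) ^ 2 * exp (2 * L)) := by
        rw [mul_pow, ← exp_nat_mul, one_div, inv_pow, one_div, mul_inv, ← exp_neg]
        push_cast; ring_nf
      rw [h1, mul_one_div, lt_div_iff₀ (by positivity)]
      have h2 : 2 * π ^ 2 < 20 := by nlinarith [pi_lt_d2, pi_gt_three]
      refine lt_of_lt_of_le ?_ hKge
      rw [mul_assoc 20]
      gcongr
  obtain ⟨A, -, hA⟩ := key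
  obtain ⟨s₀, hs₀, hsum⟩ := exists_signs_greedyError Q τ
  refine ⟨fun n => if n ∈ midPrimes N then (if n ∈ A then 1 else -1) else s₀ n, fun n => ?_, ?_⟩
  · dsimp only
    split_ifs
    · exact Or.inl rfl
    · exact Or.inr rfl
    · exact hs₀ n
  · rw [one_mul]
    refine le_trans (le_of_eq ?_) hA
    congr 1
    rw [hx, ← hsum N, sub_add_eq_add_sub]
    congr 1
    have : signedSum (fun p => 1 / (p : ℝ)) (midPrimes N) A = ∑ n ∈ Finset.Icc 1 N,
        if n ∈ midPrimes N then (if n ∈ A then (1 : ℝ) else -1) * (1 / (n : ℝ)) else 0 := by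
      rw [← Finset.sum_filter, signedSum]
      congr 1
      ext n
      simp only [midPrimes, Finset.mem_filter]
      tauto
    rw [this, ← Finset.sum_add_distrib]
    refine Finset.sum_congr rfl fun n _ => ?_
    simp only [hQdef]
    split_ifs <;> ring
end

section
/- Let β : ℕ → ℝ be a decreasing function with β(n) → 0 and β(n) ≤ 1/(8 log log n) for all sufficiently large n, and let (b_n)_{n≥1} be a strictly increasing sequence of positive integers with n ≤ b_n ≤ n^{1+β(n)} for all n. Then for every fixed A > 0 one has |ϱ(x)| < x^{−A} for all sufficiently large real x, where ϱ(x) = ∏_{n=1}^∞ cos(π x / b_n). -/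
open Filter Real

/-!
Every factor of the product has absolute value at most `1`, so `|ϱ x|` is bounded by any subproduct.
The factors with `2 x ≤ n ≤ 6 x` suffice: there `b n ≥ n ≥ 2 x`, so `π x / b n` lies in `[0, π / 2]`
and `0 ≤ cos (π x / b n) ≤ exp (-2 (x / b n) ^ 2)`, while `β n ≤ 1 / 4` for large `n` gives
`b n ≤ (6 x) ^ (5 / 4)`. At least `2 x` such factors give `|ϱ x| ≤ exp (-√(6 x) / 54)`, which is
smaller than every power of `x`.
Convergence follows from `|cos t - 1| ≤ t ^ 2 / 2` and `b n ≥ n`.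
-/

lemma exists_tendsto_prod_cos (b : ℕ → ℕ) (hb_lb : ∀ n : ℕ, 1 ≤ n → (n : ℝ) ≤ b n) (x : ℝ) :
    ∃ l : ℝ, Tendsto (fun N : ℕ => ∏ n ∈ Finset.Icc 1 N, Real.cos (π * x / (b n : ℝ)))
      atTop (nhds l) := by
  have hsum : Summable (fun n : ℕ => (π * x) ^ 2 / 2 * (1 / ((n + 1 : ℕ) : ℝ) ^ 2)) :=
    ((summable_nat_add_iff 1).2 (Real.summable_one_div_nat_pow.2 one_lt_two)).mul_left _
  have hs : Summable (fun n : ℕ => ‖Real.cos (π * x / (b (n + 1) : ℝ)) - 1‖) := by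
    refine Summable.of_nonneg_of_le (fun _ => norm_nonneg _) (fun n => ?_) hsum
    have h1 := Real.one_sub_sq_div_two_le_cos (x := π * x / (b (n + 1) : ℝ))
    have h2 := Real.cos_le_one (π * x / (b (n + 1) : ℝ))
    have h3 : 1 / (b (n + 1) : ℝ) ^ 2 ≤ 1 / ((n + 1 : ℕ) : ℝ) ^ 2 := by
      have := hb_lb (n + 1) (by omega)
      gcongr
    rw [Real.norm_eq_abs, abs_of_nonpos (by linarith)]
    calc -(Real.cos (π * x / (b (n + 1) : ℝ)) - 1)
        ≤ (π * x / (b (n + 1) : ℝ)) ^ 2 / 2 := by linarith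
      _ = (π * x) ^ 2 / 2 * (1 / (b (n + 1) : ℝ) ^ 2) := by ring
      _ ≤ _ := by gcongr
  have hm := multipliable_one_add_of_summable hs
  refine ⟨_, hm.hasProd.tendsto_prod_nat.congr fun N => ?_⟩
  rw [Finset.range_eq_Ico, Finset.prod_congr rfl (fun n _ => add_sub_cancel _ _),
    Finset.prod_Ico_add' (fun n => Real.cos (π * x / (b n : ℝ))) 0 N 1]
  rfl

/-- A factor whose denominator is at least `2 x` has its argument in `[0, π / 2]`, where the
quadratic upper bound for `cos` gives Gaussian-type decay in `x / c`. -/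
lemma cos_factor_bound {x c : ℝ} (hx : 0 < x) (hc : 2 * x ≤ c) :
    |Real.cos (π * x / c)| ≤ Real.exp (-(2 * (x / c) ^ 2)) := by
  have hc0 : 0 < c := by linarith
  have hxc : x / c ≤ 1 / 2 := by rw [div_le_div_iff₀ hc0 two_pos]; linarith
  have hxc0 : 0 < x / c := div_pos hx hc0
  have hpi := Real.pi_pos
  rw [mul_div_assoc]
  have h0 : 0 ≤ π * (x / c) := by positivity
  have h1 : π * (x / c) ≤ π / 2 := by nlinarith
  rw [abs_of_nonneg (Real.cos_nonneg_of_mem_Icc ⟨by linarith, h1⟩)]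
  have h2 := Real.cos_le_one_sub_mul_cos_sq (x := π * (x / c))
    (by rw [abs_of_nonneg h0]; linarith)
  have h3 : 2 / π ^ 2 * (π * (x / c)) ^ 2 = 2 * (x / c) ^ 2 := by field_simp
  have h4 := Real.add_one_le_exp (-(2 * (x / c) ^ 2))
  linarith

/-- Quantitative bound for the partial products, from the indices `M ≤ n ≤ 2 M` with
`M = ⌈2 x⌉`. -/
lemma abs_prod_cos_le_s10 (b : ℕ → ℕ) (hb_lb : ∀ n : ℕ, 1 ≤ n → (n : ℝ) ≤ b n)
    {x : ℝ} (hx : 1 ≤ x)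
    (hub : ∀ n : ℕ, 2 * x ≤ n → (b n : ℝ) ≤ (n : ℝ) ^ (5 / 4 : ℝ))
    {N : ℕ} (hN : 2 * ⌈2 * x⌉₊ ≤ N) :
    |∏ n ∈ Finset.Icc 1 N, Real.cos (π * x / (b n : ℝ))| ≤ Real.exp (-(√(6 * x) / 54)) := by
  set M := ⌈2 * x⌉₊ with hM
  have hM1 : 2 * x ≤ M := Nat.le_ceil _
  have hM2 : (M : ℝ) ≤ 3 * x := by
    have := Nat.ceil_lt_add_one (a := 2 * x) (by linarith)
    linarith
  have hM0 : 1 ≤ M := by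
    have : (1 : ℝ) ≤ M := by linarith
    exact_mod_cast this
  -- In terms of `s` the bound `b n ≤ (6 x) ^ (5 / 4)` reads `(b n) ^ 2 ≤ s ^ 5`, with an
  -- integer exponent.
  set s := √(6 * x) with hs
  have hs2 : s ^ 2 = 6 * x := Real.sq_sqrt (by linarith)
  have hs0 : 0 < s := Real.sqrt_pos.2 (by linarith)
  have hfac : ∀ n ∈ Finset.Icc M (2 * M),
      |Real.cos (π * x / (b n : ℝ))| ≤ Real.exp (-(1 / (18 * s))) := by
    intro n hn
    rw [Finset.mem_Icc] at hn
    have hn1 : (M : ℝ) ≤ n := by exact_mod_cast hn.1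
    have hn2 : (n : ℝ) ≤ 2 * M := by exact_mod_cast hn.2
    have hbl := hb_lb n (hM0.trans hn.1)
    have hb0 : (0 : ℝ) < b n := by linarith
    refine (cos_factor_bound (by linarith) (by linarith)).trans ?_
    have hbu : (b n : ℝ) ≤ (6 * x) ^ (5 / 4 : ℝ) :=
      (hub n (by linarith)).trans
        (Real.rpow_le_rpow (by positivity) (by linarith) (by norm_num))
    have hb2 : (b n : ℝ) ^ 2 ≤ s ^ 5 := by
      calc (b n : ℝ) ^ 2 ≤ ((6 * x) ^ (5 / 4 : ℝ)) ^ 2 := by gcongr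
        _ = s ^ 5 := by
          rw [hs, Real.sqrt_eq_rpow, ← Real.rpow_mul_natCast (by linarith),
            ← Real.rpow_mul_natCast (by linarith)]
          norm_num
    rw [Real.exp_le_exp, neg_le_neg_iff, div_pow, ← mul_div_assoc,
      div_le_div_iff₀ (by positivity) (by positivity)]
    have hx' : x = s ^ 2 / 6 := by linarith
    rw [hx']
    calc 1 * (b n : ℝ) ^ 2 ≤ s ^ 5 := by linarith
      _ = 2 * (s ^ 2 / 6) ^ 2 * (18 * s) := by ring
  rw [Finset.abs_prod]
  calc ∏ n ∈ Finset.Icc 1 N, |Real.cos (π * x / (b n : ℝ))|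
      ≤ ∏ n ∈ Finset.Icc M (2 * M), |Real.cos (π * x / (b n : ℝ))| :=
        Finset.prod_le_prod_of_subset_of_le_one (Finset.Icc_subset_Icc hM0 hN)
          (fun _ _ => abs_nonneg _) (fun _ _ _ => Real.abs_cos_le_one _)
    _ ≤ ∏ n ∈ Finset.Icc M (2 * M), Real.exp (-(1 / (18 * s))) :=
        Finset.prod_le_prod (fun _ _ => abs_nonneg _) hfac
    _ = Real.exp (-((M + 1 : ℝ) / (18 * s))) := by
        rw [Finset.prod_const, ← Real.exp_nat_mul, Nat.card_Icc,
          show 2 * M + 1 - M = M + 1 by omega]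
        congr 1
        push_cast
        ring
    _ ≤ Real.exp (-(s / 54)) := by
        rw [Real.exp_le_exp, neg_le_neg_iff, div_le_div_iff₀ (by norm_num) (by positivity)]
        nlinarith

lemma eventually_exp_neg_sqrt_lt (A : ℝ) (hA : 0 < A) :
    ∀ᶠ x : ℝ in atTop, Real.exp (-(√(6 * x) / 54)) < x ^ (-A) := by
  have h := (isLittleO_log_rpow_atTop (r := 1 / 2) (by norm_num)).bound
    (c := 1 / (54 * A)) (by positivity)
  filter_upwards [h, eventually_ge_atTop 1] with x hx hx1
  have hx0 : 0 < x := by linarith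
  rw [← Real.sqrt_eq_rpow, Real.norm_of_nonneg (Real.log_nonneg hx1),
    Real.norm_of_nonneg (Real.sqrt_nonneg x)] at hx
  rw [Real.rpow_def_of_pos hx0, Real.exp_lt_exp]
  have h2 : √x < √(6 * x) := Real.sqrt_lt_sqrt hx0.le (by linarith)
  have h3 : A * Real.log x ≤ √x / 54 := by
    calc A * Real.log x ≤ A * (1 / (54 * A) * √x) := by gcongr
      _ = √x / 54 := by field_simp
  linarith

/-- **Corollary (polynomial decay of `ϱ`).**
Let `β : ℕ → ℝ` be decreasing with `β n → 0` and `β n ≤ 1/(8 log log n)` for all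
sufficiently large `n`, and let `(b n)_{n ≥ 1}` be a strictly increasing sequence
of positive integers with `n ≤ b n ≤ n ^ (1 + β n)`. Then the infinite product
`ϱ(x) = ∏_{n=1}^∞ cos (π x / b n)` converges for each `x`, and for every fixed
`A > 0` one has `|ϱ(x)| < x^{−A}` for all sufficiently large real `x`. -/
theorem rho_polynomial_decay
    (β : ℕ → ℝ) (hβ_anti : Antitone β)
    (hβ_lim : Tendsto β atTop (nhds 0))
    (hβ_le : ∀ᶠ n : ℕ in atTop, β n ≤ 1 / (8 * Real.log (Real.log n)))
    (b : ℕ → ℕ)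
    (hb_mono : ∀ m n : ℕ, 1 ≤ m → m < n → b m < b n)
    (hb_pos : ∀ n : ℕ, 1 ≤ n → 0 < b n)
    (hb_lb : ∀ n : ℕ, 1 ≤ n → (n : ℝ) ≤ b n)
    (hb_ub : ∀ n : ℕ, 1 ≤ n → (b n : ℝ) ≤ (n : ℝ) ^ (1 + β n)) :
    ∃ ϱ : ℝ → ℝ,
      (∀ x : ℝ,
        Tendsto (fun N : ℕ => ∏ n ∈ Finset.Icc 1 N, Real.cos (π * x / (b n : ℝ)))
          atTop (nhds (ϱ x))) ∧
      ∀ A : ℝ, 0 < A → ∃ x₀ : ℝ, ∀ x : ℝ, x₀ ≤ x → |ϱ x| < x ^ (-A) := by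
  choose ϱ hϱ using exists_tendsto_prod_cos b hb_lb
  refine ⟨ϱ, hϱ, fun A hA => ?_⟩
  obtain ⟨n₀, hn₀⟩ := eventually_atTop.1
    (hβ_lim.eventually_le_const (show (0 : ℝ) < 1 / 4 by norm_num))
  refine eventually_atTop.1 ?_
  filter_upwards [eventually_exp_neg_sqrt_lt A hA, eventually_ge_atTop 1,
    eventually_ge_atTop (n₀ : ℝ)] with x hx hx1 hxn
  refine lt_of_le_of_lt ?_ hx
  refine le_of_tendsto (hϱ x).abs ?_
  filter_upwards [eventually_ge_atTop (2 * ⌈2 * x⌉₊)] with N hN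
  refine abs_prod_cos_le_s10 b hb_lb hx1 (fun n hn => ?_) hN
  have hn1 : (1 : ℝ) ≤ n := by linarith
  have hnn : n₀ ≤ n := by
    have : (n₀ : ℝ) ≤ n := by linarith
    exact_mod_cast this
  refine (hb_ub n (by exact_mod_cast hn1)).trans (Real.rpow_le_rpow_of_exponent_le hn1 ?_)
  linarith [hn₀ n hnn]
end
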